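/- arXiv:0801.0054 — 2 statements merged into one kernel-verified Lean document; each statement's English description precedes it below -/
import Mathlib

section
/- Let E(n) be the number of entries x of the n-th generation of the Calkin–Wilf tree such that, writing x = a/b in lowest terms, at least one of a, b is even, and let O(n) be the number of entries with both a and b odd. Then for every n ≥ 1, E(n) = (2^n + 2·(−1)^n)/3 and O(n) = (2^(n−1) + 2·(−1)^(n−1))/3. -/
/-- The generations of the Calkin–Wilf tree: `CW 0 = [1/1]` is the first
generation, and each generation is obtained from the previous one by replacing
each entry `x` by `x/(x+1)` and `x+1`, in this order.  Thus the `n`-th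
generation of the paper is `CW (n-1)`.  Every entry, as a `ℚ`, is automatically
in lowest terms `a/b = q.num / q.den` with `gcd(a,b) = 1`. -/
def CW : ℕ → List ℚ
  | 0 => [1]
  | n + 1 => (CW n).flatMap (fun x => [x / (x + 1), x + 1])

theorem cw_add_one (x : ℚ) : (x + 1).num = x.num + x.den ∧ ((x + 1).den : ℤ) = x.den := by
  have hb : (0 : ℤ) < x.den := by exact_mod_cast x.pos
  have hc : Nat.Coprime (x.num + x.den).natAbs (x.den : ℤ).natAbs := by
    rw [← Int.isCoprime_iff_nat_coprime]
    obtain ⟨u, v, h⟩ := Rat.isCoprime_num_den x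
    exact ⟨u, v - u, by linear_combination h⟩
  have hx : x + 1 = ((x.num + x.den : ℤ) : ℚ) / ((x.den : ℤ) : ℚ) := by
    have h0 : (x.den : ℚ) ≠ 0 := by exact_mod_cast x.den_ne_zero
    have := Rat.num_div_den x
    push_cast
    rw [add_div, div_self h0, this]
  constructor
  · conv_lhs => rw [hx]
    exact Rat.num_div_eq_of_coprime hb hc
  · conv_lhs => rw [hx]
    exact Rat.den_div_eq_of_coprime hb hc

theorem cw_div_add_one (x : ℚ) (h : 0 < x) :
    (x / (x + 1)).num = x.num ∧ ((x / (x + 1)).den : ℤ) = x.num + x.den := by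
  have hn : 0 < x.num := Rat.num_pos.mpr h
  have hb : (0 : ℤ) < x.num + x.den := by positivity
  have hc : Nat.Coprime x.num.natAbs (x.num + x.den).natAbs := by
    rw [← Int.isCoprime_iff_nat_coprime]
    obtain ⟨u, v, h⟩ := Rat.isCoprime_num_den x
    exact ⟨u - v, v, by linear_combination h⟩
  have hx : x / (x + 1) = ((x.num : ℤ) : ℚ) / ((x.num + x.den : ℤ) : ℚ) := by
    have h0 : (x.den : ℚ) ≠ 0 := by exact_mod_cast x.den_ne_zero
    have h1 : (x.num : ℚ) = x * x.den := (Rat.mul_den_eq_num x).symm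
    have h2 : x + 1 ≠ 0 := by positivity
    push_cast
    rw [h1, show x * x.den + x.den = (x + 1) * (x.den : ℚ) by ring, mul_div_mul_right _ _ h0]
  constructor
  · conv_lhs => rw [hx]
    exact Rat.num_div_eq_of_coprime hb hc
  · conv_lhs => rw [hx]
    exact Rat.den_div_eq_of_coprime hb hc

theorem cw_pos (n : ℕ) : ∀ x ∈ CW n, 0 < x := by
  induction n with
  | zero => simp [CW]
  | succ n ih =>
    intro x hx
    simp only [CW, List.mem_flatMap, List.mem_cons, List.not_mem_nil, or_false] at hx
    obtain ⟨y, hy, h⟩ := hx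
    have := ih y hy
    rcases h with rfl | rfl <;> positivity

theorem cw_not_both_even (x : ℚ) : ¬ (Even x.num ∧ Even (x.den : ℤ)) := by
  rintro ⟨h1, h2⟩
  have h := (Rat.isCoprime_num_den x).isUnit_of_dvd' h1.two_dvd h2.two_dvd
  exact absurd h (by decide)

theorem cw_step (l : List ℚ) (hl : ∀ x ∈ l, 0 < x) :
    ((l.flatMap (fun x => [x / (x + 1), x + 1])).countP
      (fun q => decide (Even q.num ∨ Even q.den)) =
      l.countP (fun q => decide (Even q.num ∨ Even q.den)) +
      2 * l.countP (fun q => decide (Odd q.num ∧ Odd q.den))) ∧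
    ((l.flatMap (fun x => [x / (x + 1), x + 1])).countP
      (fun q => decide (Odd q.num ∧ Odd q.den)) =
      l.countP (fun q => decide (Even q.num ∨ Even q.den))) := by
  induction l with
  | nil => simp
  | cons x l ih =>
    obtain ⟨i1, i2⟩ := ih (fun y hy => hl y (List.mem_cons_of_mem _ hy))
    obtain ⟨a1, a2⟩ := cw_add_one x
    obtain ⟨b1, b2⟩ := cw_div_add_one x (hl x List.mem_cons_self)
    have hne := cw_not_both_even x
    simp only [List.flatMap_cons, List.countP_append, List.countP_cons, List.countP_nil]
    rw [i1, i2]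
    generalize l.countP (fun q => decide (Even q.num ∨ Even q.den)) = c
    generalize l.countP (fun q => decide (Odd q.num ∧ Odd q.den)) = d
    simp only [← Int.even_coe_nat, ← Int.odd_coe_nat, a1, a2, b1, b2, decide_eq_true_eq,
      ← Int.not_even_iff_odd, Int.even_add]
    by_cases h1 : Even x.num <;> by_cases h2 : Even (x.den : ℤ) <;>
      simp only [h1, h2] at hne ⊢ <;> simp at hne ⊢ <;> omega

theorem cw_count (m : ℕ) :
    (((CW m).countP (fun q => decide (Even q.num ∨ Even q.den)) : ℚ) =
        (2 ^ (m + 1) + 2 * (-1 : ℚ) ^ (m + 1)) / 3) ∧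
    (((CW m).countP (fun q => decide (Odd q.num ∧ Odd q.den)) : ℚ) =
        (2 ^ m + 2 * (-1 : ℚ) ^ m) / 3) := by
  induction m with
  | zero => norm_num [CW, List.countP_cons]
  | succ m ih =>
    obtain ⟨s1, s2⟩ := cw_step (CW m) (cw_pos m)
    obtain ⟨i1, i2⟩ := ih
    rw [CW, s1, s2]
    push_cast
    rw [i1, i2]
    constructor <;> ring

/-- Let `E(n)` be the number of entries `a/b` (in lowest terms) of the `n`-th
generation of the Calkin–Wilf tree with at least one of `a`, `b` even, and
`O(n)` the number of entries with both `a` and `b` odd.  Then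
`E(n) = (2^n + 2·(−1)^n)/3` and `O(n) = (2^(n−1) + 2·(−1)^(n−1))/3`. -/
theorem calkin_wilf_parity_count (n : ℕ) (hn : 1 ≤ n) :
    (((CW (n - 1)).countP (fun q => decide (Even q.num ∨ Even q.den)) : ℚ) =
        (2 ^ n + 2 * (-1 : ℚ) ^ n) / 3) ∧
    (((CW (n - 1)).countP (fun q => decide (Odd q.num ∧ Odd q.den)) : ℚ) =
        (2 ^ (n - 1) + 2 * (-1 : ℚ) ^ (n - 1)) / 3) := by
  obtain ⟨m, rfl⟩ : ∃ m, n = m + 1 := ⟨n - 1, by omega⟩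
  exact cw_count m
end

section
/- Let p be a prime and z ∈ ℤ_p a p-adic integer. Then the proportion of entries of the n-th generation of the Calkin–Wilf tree lying in the ball { u ∈ ℚ_p : ord_p(u − z) ≥ 1 } converges: lim_{n→∞} F_n(z,1) = 1/(p+1). -/
open Filter

open scoped Classical in
/-- `FcwP p ν z (n-1) = F_n(z,ν) = 2^(1-n) · #{j : ord_p(x_j^(n) − z) ≥ ν}` is
the proportion of entries of the `n`-th generation of the Calkin–Wilf tree
(viewed in `ℚ_p`) lying in the ball `{u : ord_p(u − z) ≥ ν}`, the latter
condition being expressed via the `p`-adic norm as `‖u − z‖_p ≤ p^(−ν)`. -/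
noncomputable def FcwP (p : ℕ) [Fact p.Prime] (ν : ℤ) (z : ℚ_[p]) (n : ℕ) : ℝ :=
  ((CW n).countP (fun q => decide (‖(q : ℚ_[p]) - z‖ ≤ (p : ℝ) ^ (-ν)))) / 2 ^ n

namespace CWaux

/-- Translation `x ↦ x + 1` on the projective line. -/
def B (p : ℕ) : Option (ZMod p) ≃ Option (ZMod p) := Equiv.optionCongr (Equiv.addRight 1)

/-- Inversion on the projective line. -/
def Jf (p : ℕ) [Fact p.Prime] : Option (ZMod p) → Option (ZMod p)
  | none => some 0
  | some x => if x = 0 then none else some x⁻¹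

lemma Jf_inv (p : ℕ) [Fact p.Prime] : Function.Involutive (Jf p) := by
  intro s
  cases s with
  | none => simp [Jf]
  | some x =>
    by_cases h : x = 0
    · simp [Jf, h]
    · simp [Jf, h]

def J (p : ℕ) [Fact p.Prime] : Option (ZMod p) ≃ Option (ZMod p) := (Jf_inv p).toPerm

def A (p : ℕ) [Fact p.Prime] : Option (ZMod p) ≃ Option (ZMod p) :=
  (J p).trans ((B p).trans (J p))

lemma A_zero (p : ℕ) [Fact p.Prime] : A p (some 0) = some 0 := by
  simp [A, J, B, Jf]

lemma A_none (p : ℕ) [Fact p.Prime] : A p none = some 1 := by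
  simp [A, J, B, Jf]

lemma abs_lim (p : ℕ) [Fact p.Prime] (f : ℕ → Option (ZMod p) → ℝ)
    (hrec : ∀ n s, f (n+1) s = (f n ((A p).symm s) + f n ((B p).symm s)) / 2)
    (h0 : ∑ s, f 0 s = 1) (s : Option (ZMod p)) :
    Tendsto (fun n => f n s) atTop (nhds (1 / ((p : ℝ) + 1))) := by
  have hsum : ∀ n, ∑ s, f n s = 1 := by
    intro n
    induction n with
    | zero => exact h0
    | succ n ih =>
      simp only [hrec]
      rw [← Finset.sum_div, Finset.sum_add_distrib, Equiv.sum_comp (A p).symm (f n),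
        Equiv.sum_comp (B p).symm (f n), ih]
      norm_num
  set E : ℕ → ℝ := fun n => ∑ s, (f n s)^2 with hE
  set D : ℕ → ℝ := fun n => ∑ s, (f n ((A p).symm s) - f n ((B p).symm s))^2 with hD
  have hED : ∀ n, D n = 4 * (E n - E (n+1)) := by
    intro n
    have h1 := Equiv.sum_comp (A p).symm (fun s => (f n s)^2)
    have h2 := Equiv.sum_comp (B p).symm (fun s => (f n s)^2)
    have h3 : D n + 4 * E (n+1) = 2 * ∑ s, (f n ((A p).symm s))^2
        + 2 * ∑ s, (f n ((B p).symm s))^2 := by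
      simp only [hD, hE, hrec, Finset.mul_sum, ← Finset.sum_add_distrib]
      refine Finset.sum_congr rfl fun s _ => by ring
    rw [h1, h2] at h3
    simp only [hE] at h3 ⊢
    linarith
  have hDnn : ∀ n, 0 ≤ D n := fun n => Finset.sum_nonneg fun _ _ => sq_nonneg _
  have hanti : Antitone E := antitone_nat_of_succ_le fun n => by
    have := hED n; have := hDnn n; linarith
  have hbdd : BddBelow (Set.range E) := ⟨0, by
    rintro _ ⟨n, rfl⟩
    exact Finset.sum_nonneg fun _ _ => sq_nonneg _⟩
  have hElim := tendsto_atTop_ciInf hanti hbdd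
  have hDlim : Tendsto D atTop (nhds 0) := by
    have h := (hElim.sub (hElim.comp (tendsto_add_atTop_nat 1))).const_mul 4
    simp only [sub_self, mul_zero] at h
    refine h.congr fun n => (hED n).symm
  have hdiff : ∀ s, Tendsto (fun n => f n ((A p).symm s) - f n ((B p).symm s)) atTop (nhds 0) := by
    intro s
    have hsq : Tendsto (fun n => (f n ((A p).symm s) - f n ((B p).symm s))^2) atTop (nhds 0) :=
      squeeze_zero (fun _ => sq_nonneg _) (fun n =>
        Finset.single_le_sum (f := fun s => (f n ((A p).symm s) - f n ((B p).symm s))^2)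
          (fun _ _ => sq_nonneg _) (Finset.mem_univ s)) hDlim
    have h := hsq.sqrt
    simp only [Real.sqrt_sq_eq_abs, Real.sqrt_zero] at h
    exact (tendsto_zero_iff_abs_tendsto_zero _).2 h
  have hA : ∀ t, Tendsto (fun n => f (n+1) (A p t) - f n t) atTop (nhds 0) := by
    intro t
    have h := (hdiff (A p t)).const_mul (-1/2)
    rw [mul_zero] at h
    refine h.congr fun n => ?_
    rw [hrec, Equiv.symm_apply_apply]; ring
  have hB : ∀ t, Tendsto (fun n => f (n+1) (B p t) - f n t) atTop (nhds 0) := by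
    intro t
    have h := (hdiff (B p t)).const_mul (1/2)
    rw [mul_zero] at h
    refine h.congr fun n => ?_
    rw [hrec, Equiv.symm_apply_apply]; ring
  have key : ∀ k : ℕ, Tendsto (fun n => f n (some ((k:ZMod p)+1)) - f n (some (k : ZMod p)))
      atTop (nhds 0) := by
    intro k
    rw [← tendsto_add_atTop_iff_nat 1]
    induction k with
    | zero =>
      have h := (hB (some 0)).sub (hA (some 0))
      rw [A_zero] at h
      simpa [B] using h
    | succ k ih =>
      rw [tendsto_add_atTop_iff_nat (f := fun n => f n (some ((k:ZMod p)+1)) - f n (some (k : ZMod p)))] at ih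
      have h := ((hB (some ((k:ZMod p)+1))).sub (hB (some (k:ZMod p)))).add ih
      simp only [sub_self, add_zero] at h
      refine h.congr fun n => ?_
      simp [B]
      ring
  have key2 : ∀ k : ℕ, Tendsto (fun n => f n (some (k:ZMod p)) - f n (some 0)) atTop (nhds 0) := by
    intro k
    induction k with
    | zero => simp
    | succ k ih =>
      have h := (key k).add ih
      rw [add_zero] at h
      refine h.congr fun n => ?_
      push_cast; ring
  have keyinf : Tendsto (fun n => f n none - f n (some 0)) atTop (nhds 0) := by
    have h1 : Tendsto (fun n => f n none - f n (some 1)) atTop (nhds 0) := by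
      rw [← tendsto_add_atTop_iff_nat 1]
      have h := (hB none).sub (hA none)
      rw [A_none] at h
      simpa [B] using h
    have h2 := key2 1
    have h := h1.add h2
    rw [add_zero] at h
    refine h.congr fun n => ?_
    push_cast; ring
  have all0 : ∀ t, Tendsto (fun n => f n t - f n (some 0)) atTop (nhds 0) := by
    intro t
    cases t with
    | none => exact keyinf
    | some x =>
      have h := key2 x.val
      rwa [ZMod.natCast_zmod_val] at h
  have hst : Tendsto (fun n => ∑ t, (f n s - f n t)) atTop (nhds 0) := by
    have h : Tendsto (fun n => ∑ t, ((f n s - f n (some 0)) - (f n t - f n (some 0)))) atTop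
        (nhds (∑ t : Option (ZMod p), ((0:ℝ) - 0))) :=
      tendsto_finsetSum _ fun t _ => (all0 s).sub (all0 t)
    simpa using h
  have hp : (0:ℝ) < (p:ℝ) + 1 := by positivity
  have h := (hst.add_const 1).div_const ((p:ℝ)+1)
  rw [zero_add] at h
  refine h.congr fun n => ?_
  rw [Finset.sum_sub_distrib, hsum]
  simp [ZMod.card]
  field_simp

/-- An element of norm at most one as a `p`-adic integer. -/
def toI (p : ℕ) [Fact p.Prime] (u : ℚ_[p]) (h : ‖u‖ ≤ 1) : ℤ_[p] := ⟨u, h⟩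

open scoped Classical in
/-- Reduction to the projective line over `ZMod p`. -/
noncomputable def red (p : ℕ) [Fact p.Prime] (u : ℚ_[p]) : Option (ZMod p) :=
  if h : ‖u‖ ≤ 1 then some (PadicInt.toZMod (toI p u h)) else none

lemma toZMod_eq_zero (p : ℕ) [Fact p.Prime] (x : ℤ_[p]) :
    PadicInt.toZMod x = 0 ↔ ‖x‖ < 1 := by
  rw [← RingHom.mem_ker, PadicInt.ker_toZMod, IsLocalRing.mem_maximalIdeal, PadicInt.mem_nonunits]

lemma red_add_one (p : ℕ) [Fact p.Prime] (u : ℚ_[p]) : red p (u + 1) = B p (red p u) := by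
  by_cases h : ‖u‖ ≤ 1
  · have h' : ‖u + 1‖ ≤ 1 := (Padic.nonarchimedean u 1).trans (by simp [h])
    have : toI p (u + 1) h' = toI p u h + 1 := rfl
    simp [red, h, h', this, B]
  · have h' : ¬ ‖u + 1‖ ≤ 1 := fun h' => h (by
      have := Padic.nonarchimedean (u + 1) (-1)
      rw [add_neg_cancel_right, norm_neg, norm_one] at this
      exact this.trans (by simp [h']))
    simp [red, h, h', B]

lemma red_inv (p : ℕ) [Fact p.Prime] (u : ℚ_[p]) (hu : u ≠ 0) : red p u⁻¹ = J p (red p u) := by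
  have hpos : 0 < ‖u‖ := norm_pos_iff.2 hu
  rcases lt_trichotomy ‖u‖ 1 with h | h | h
  · have h2 : ¬ ‖u⁻¹‖ ≤ 1 := by
      rw [norm_inv, not_le]; exact (one_lt_inv₀ hpos).2 h
    have h3 : PadicInt.toZMod (toI p u h.le) = 0 := (toZMod_eq_zero p _).2 h
    simp only [red, h2, h.le, dite_true, dite_false, h3]
    simp [J, Jf]
  · have h2 : ‖u⁻¹‖ ≤ 1 := by rw [norm_inv, h]; simp
    have h3 : PadicInt.toZMod (toI p u h.le) ≠ 0 := by
      rw [Ne, toZMod_eq_zero]; exact not_lt.2 h.ge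
    have h4 : (toI p u⁻¹ h2) * toI p u h.le = 1 := by
      apply Subtype.ext
      change u⁻¹ * u = 1
      exact inv_mul_cancel₀ hu
    have h5 := congrArg (PadicInt.toZMod (p := p)) h4
    rw [map_mul, map_one] at h5
    simp only [red, h2, h.le, dite_true]
    simp [J, Jf, h3, eq_inv_of_mul_eq_one_left h5]
  · have h2 : ‖u⁻¹‖ < 1 := by
      rw [norm_inv]; exact inv_lt_one_of_one_lt₀ h
    have h3 : PadicInt.toZMod (toI p u⁻¹ h2.le) = 0 := (toZMod_eq_zero p _).2 h2
    simp only [red, h2.le, not_le.2 h, dite_true, dite_false, h3]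
    simp [J, Jf]

lemma red_A (p : ℕ) [Fact p.Prime] (q : ℚ) (hq : 0 < q) :
    red p ((q / (q + 1) : ℚ) : ℚ_[p]) = A p (red p (q : ℚ_[p])) := by
  have h0 : (q : ℚ_[p]) ≠ 0 := by exact_mod_cast hq.ne'
  have h1 : ((q⁻¹ + 1 : ℚ) : ℚ_[p]) ≠ 0 := by
    have : (q⁻¹ + 1 : ℚ) ≠ 0 := by positivity
    exact_mod_cast this
  have h2 : q / (q + 1) = (q⁻¹ + 1)⁻¹ := by field_simp; ring
  rw [h2, Rat.cast_inv, red_inv p _ h1, Rat.cast_add, Rat.cast_one, red_add_one, Rat.cast_inv,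
    red_inv p _ h0]
  rfl

lemma red_ball (p : ℕ) [Fact p.Prime] (u : ℚ_[p]) (z : ℤ_[p]) :
    ‖u - z‖ ≤ (p : ℝ) ^ (-1 : ℤ) ↔ red p u = some (PadicInt.toZMod z) := by
  have hp1 : (p : ℝ) ^ (-1 : ℤ) < 1 := by
    rw [zpow_neg_one]
    exact inv_lt_one_of_one_lt₀ (by exact_mod_cast (Fact.out : p.Prime).one_lt)
  by_cases h : ‖u‖ ≤ 1
  · simp only [red, h, dite_true, Option.some.injEq]
    rw [← sub_eq_zero, ← map_sub, toZMod_eq_zero]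
    have := PadicInt.norm_le_pow_iff_norm_lt_pow_add_one (toI p u h - z) (-1)
    simp only [neg_add_cancel, zpow_zero] at this
    rw [← this]
    rfl
  · simp only [red, h, dite_false]
    simp only [reduceCtorEq, iff_false]
    intro hh
    apply h
    have := Padic.nonarchimedean (u - (z : ℚ_[p])) (z : ℚ_[p])
    rw [sub_add_cancel] at this
    exact this.trans (max_le (hh.trans hp1.le) z.norm_le_one)

lemma CW_pos : ∀ n, ∀ q ∈ CW n, 0 < q := by
  intro n
  induction n with
  | zero => simp [CW]
  | succ n ih =>
    intro q hq
    simp only [CW, List.mem_flatMap] at hq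
    obtain ⟨x, hx, hq⟩ := hq
    have := ih x hx
    simp only [List.mem_cons, List.not_mem_nil, or_false] at hq
    rcases hq with rfl | rfl <;> positivity

lemma count_flat (p : ℕ) [Fact p.Prime] (s : Option (ZMod p)) (l : List ℚ) (hl : ∀ q ∈ l, 0 < q) :
    (l.flatMap (fun x => [x / (x + 1), x + 1])).countP (fun q : ℚ => decide (red p (q : ℚ_[p]) = s))
    = l.countP (fun q : ℚ => decide (red p (q : ℚ_[p]) = (A p).symm s))
      + l.countP (fun q : ℚ => decide (red p (q : ℚ_[p]) = (B p).symm s)) := by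
  induction l with
  | nil => simp
  | cons x l ih =>
    have ih := ih fun q hq => hl q (List.mem_cons_of_mem _ hq)
    have hx := hl x List.mem_cons_self
    have hb : red p ((x + 1 : ℚ) : ℚ_[p]) = B p (red p (x : ℚ_[p])) := by
      rw [Rat.cast_add, Rat.cast_one, red_add_one]
    rw [List.flatMap_cons, List.countP_append, ih]
    simp only [List.countP_cons, List.countP_nil, red_A p x hx, hb, Equiv.eq_symm_apply]
    ring

end CWaux

/-- For a prime `p` and a `p`-adic integer `z`, the proportion of entries of
the `n`-th generation of the Calkin–Wilf tree lying in the ball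
`{u ∈ ℚ_p : ord_p(u − z) ≥ 1}` converges to `1/(p+1)` as `n → ∞`. -/
theorem calkin_wilf_padic_ball_limit (p : ℕ) [Fact p.Prime] (z : ℤ_[p]) :
    Tendsto (FcwP p 1 (z : ℚ_[p])) atTop (nhds (1 / ((p : ℝ) + 1))) := by
  have hfun : FcwP p 1 (z : ℚ_[p]) = fun n => (((CW n).countP
      (fun q : ℚ => decide (CWaux.red p (q : ℚ_[p]) = some (PadicInt.toZMod z))) : ℕ) : ℝ) / 2 ^ n := by
    funext n
    unfold FcwP
    rw [bind_pure_comp, List.map_eq_map, List.countP_map]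
    congr 2
    apply List.countP_congr
    intro q _
    simp only [Function.comp_apply, decide_eq_true_eq]
    exact CWaux.red_ball p q z
  rw [hfun]
  refine CWaux.abs_lim p (fun n s => (((CW n).countP
      (fun q : ℚ => decide (CWaux.red p (q : ℚ_[p]) = s)) : ℕ) : ℝ) / 2 ^ n) ?_ ?_ _
  · intro n s
    rw [CW, CWaux.count_flat p s _ (CWaux.CW_pos n), pow_succ]
    push_cast
    field_simp
  · simp [CW, List.countP_cons]
end
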